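/- In K(3) the identity 9·z(5,{1,2,3}) = z(4,{1,2})·z(2,{3}) − z(4,{1,3})·z(2,{2}) + z(4,{2,3})·z(2,{1}) + z(3,{1,2})·z(3,{3}) − z(3,{1,3})·z(3,{2}) + z(3,{2,3})·z(3,{1}) holds. -/

import Mathlib

/-!
Write `x, y, w` for the images of the variables in `A`. From `x + y + w = 0` and
`x² + y² + w² = 0` one gets `yw = x²`, `xw = y²`, `xy = w²`, hence `x³ = y³ = w³`. Every
coefficient on either side therefore equals `x³ · r` with `r ∈ {x, y, w}`: if `r` is the third
variable besides `s ≠ t`, then `s³ t = x³ t` and `s² t² = r⁴ = x³ r`. The degree-one generators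
anticommute, so the signed sums on the right symmetrise the exterior factors: with `s_j` the
copy of `α_j, β_j` or `γ_j` attached to `s`, the right-hand side is
`6 ∑ₛ x³ s ⊗ s₁s₂s₃ + ∑_{s ≠ t} x³ (t + r) ⊗ (s₁s₂t₃ + s₁t₂s₃ + t₁s₂s₃)`.
Since `t + r = -s` and `∑_{t ≠ s} t_j = -s_j`, the second sum is `3 ∑ₛ x³ s ⊗ s₁s₂s₃`,
giving `9` in total. The lemmas below supply the relations in `A` and in `E(3)`; in
`tensor_identity` the cancellation is carried out after eliminating `w = -x - y` and
`γ_j = -α_j - β_j`.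
-/

set_option synthInstance.maxHeartbeats 1000000
set_option maxHeartbeats 1000000

open MvPolynomial
open scoped TensorProduct

noncomputable section

abbrev P3 : Type := MvPolynomial (Fin 3) ℚ

def Jid : Ideal P3 :=
  Ideal.span {X 0 + X 1 + X 2, X 0 ^ 2 + X 1 ^ 2 + X 2 ^ 2, X 0 ^ 6 + X 1 ^ 6 + X 2 ^ 6}

abbrev Aq : Type := P3 ⧸ Jid

def mkA : P3 →ₐ[ℚ] Aq := Ideal.Quotient.mkₐ ℚ Jid

lemma rename_sum_pow (σ : Equiv.Perm (Fin 3)) (k : ℕ) :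
    rename σ ((X 0 : P3) ^ k + X 1 ^ k + X 2 ^ k) = (X 0 : P3) ^ k + X 1 ^ k + X 2 ^ k := by
  have h : ((X 0 : P3) ^ k + X 1 ^ k + X 2 ^ k) = ∑ i, (X i : P3) ^ k := by
    simp [Fin.sum_univ_three]
  rw [h, map_sum]
  simp only [map_pow, rename_X]
  exact Fintype.sum_equiv σ _ _ fun i => rfl

lemma rename_mem_J (σ : Equiv.Perm (Fin 3)) {p : P3} (hp : p ∈ Jid) :
    rename σ p ∈ Jid := by
  have hle : Jid.map (rename σ : P3 →ₐ[ℚ] P3).toRingHom ≤ Jid := by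
    rw [Jid, Ideal.map_span, Ideal.span_le]
    rintro q ⟨r, hr, rfl⟩
    simp only [Set.mem_insert_iff, Set.mem_singleton_iff] at hr
    have h1 := rename_sum_pow σ 1
    simp only [pow_one] at h1
    rcases hr with rfl | rfl | rfl
    · exact Ideal.subset_span (by simp only [AlgHom.toRingHom_eq_coe, RingHom.coe_coe, h1]; left; rfl)
    · exact Ideal.subset_span (by
        simp only [AlgHom.toRingHom_eq_coe, RingHom.coe_coe, rename_sum_pow σ 2]
        right; left; rfl)
    · exact Ideal.subset_span (by
        simp only [AlgHom.toRingHom_eq_coe, RingHom.coe_coe, rename_sum_pow σ 6]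
        right; right; rfl)
  exact hle (Ideal.mem_map_of_mem _ hp)

def permAq (σ : Equiv.Perm (Fin 3)) : Aq →ₐ[ℚ] Aq :=
  Ideal.Quotient.liftₐ Jid (mkA.comp (rename σ)) (fun p hp => by
    simp only [AlgHom.comp_apply, mkA, Ideal.Quotient.mkₐ_eq_mk]
    exact Ideal.Quotient.eq_zero_iff_mem.mpr (rename_mem_J σ hp))

def negP : P3 →ₐ[ℚ] P3 := aeval (fun i => -X i)

lemma negP_mem_J {p : P3} (hp : p ∈ Jid) : negP p ∈ Jid := by
  have hle : Jid.map negP.toRingHom ≤ Jid := by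
    rw [Jid, Ideal.map_span, Ideal.span_le]
    rintro q ⟨r, hr, rfl⟩
    simp only [Set.mem_insert_iff, Set.mem_singleton_iff] at hr
    rcases hr with rfl | rfl | rfl
    · have : negP ((X 0 : P3) + X 1 + X 2) = -(X 0 + X 1 + X 2) := by
        simp [negP]; try ring
      simp only [AlgHom.toRingHom_eq_coe, RingHom.coe_coe, this]
      exact neg_mem (Ideal.subset_span (by left; rfl))
    · have : negP ((X 0 : P3) ^ 2 + X 1 ^ 2 + X 2 ^ 2) = X 0 ^ 2 + X 1 ^ 2 + X 2 ^ 2 := by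
        simp [negP]; try ring
      simp only [AlgHom.toRingHom_eq_coe, RingHom.coe_coe, this]
      exact Ideal.subset_span (by right; left; rfl)
    · have : negP ((X 0 : P3) ^ 6 + X 1 ^ 6 + X 2 ^ 6) = X 0 ^ 6 + X 1 ^ 6 + X 2 ^ 6 := by
        simp [negP]; try ring
      simp only [AlgHom.toRingHom_eq_coe, RingHom.coe_coe, this]
      exact Ideal.subset_span (by right; right; rfl)
  exact hle (Ideal.mem_map_of_mem _ hp)

def negAq : Aq →ₐ[ℚ] Aq :=
  Ideal.Quotient.liftₐ Jid (mkA.comp negP) (fun p hp => by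
    simp only [AlgHom.comp_apply, mkA, Ideal.Quotient.mkₐ_eq_mk]
    exact Ideal.Quotient.eq_zero_iff_mem.mpr (negP_mem_J hp))

def Vsub : Submodule ℚ (Fin 3 → ℚ) := Submodule.span ℚ {fun _ => (1 : ℚ)}

abbrev Vq : Type := (Fin 3 → ℚ) ⧸ Vsub

def vGen (i : Fin 3) : Vq := Submodule.Quotient.mk (Pi.single i 1)

abbrev Em (m : ℕ) : Type := ExteriorAlgebra ℚ (Fin m → Vq)

def eGen (m : ℕ) (j : Fin m) (i : Fin 3) : Em m :=
  ExteriorAlgebra.ι ℚ (Pi.single j (vGen i))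

def prodGen (m : ℕ) (i : Fin 3) (I : Finset (Fin m)) : Em m :=
  ((I.sort (· ≤ ·)).map (fun j => eGen m j i)).prod

def extHom {m : ℕ} (g : (Fin m → Vq) →ₗ[ℚ] (Fin m → Vq)) : Em m →ₐ[ℚ] Em m :=
  ExteriorAlgebra.lift ℚ ⟨(ExteriorAlgebra.ι ℚ).comp g, fun v => by
    simpa using ExteriorAlgebra.ι_sq_zero (g v)⟩

def permV (σ : Equiv.Perm (Fin 3)) : Vq →ₗ[ℚ] Vq :=
  Submodule.mapQ Vsub Vsub (LinearMap.funLeft ℚ ℚ ⇑σ⁻¹) (by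
    rw [Vsub, Submodule.span_le]
    rintro v rfl
    exact Submodule.mem_comap.mpr (Submodule.subset_span rfl))

abbrev Kk (m : ℕ) : Type := Aq ⊗[ℚ] Em m

def zz (m : ℕ) (d : ℕ) (I : Finset (Fin m)) : Kk m :=
  mkA (X 0 ^ d) ⊗ₜ[ℚ] prodGen m 0 I + mkA (X 1 ^ d) ⊗ₜ[ℚ] prodGen m 1 I +
    mkA (X 2 ^ d) ⊗ₜ[ℚ] prodGen m 2 I

def zS (m : ℕ) (i : ℕ) (I : Finset (Fin m)) : Kk m := zz m (i - 1) I

lemma mkA_sum_eq_zero : mkA (X 0) + mkA (X 1) + mkA (X 2) = 0 := by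
  rw [← map_add, ← map_add]
  exact Ideal.Quotient.eq_zero_iff_mem.mpr (Ideal.subset_span (by simp))

lemma mkA_sum_sq_eq_zero : mkA (X 0) ^ 2 + mkA (X 1) ^ 2 + mkA (X 2) ^ 2 = 0 := by
  rw [← map_pow, ← map_pow, ← map_pow, ← map_add, ← map_add]
  exact Ideal.Quotient.eq_zero_iff_mem.mpr (Ideal.subset_span (by simp))

lemma mkA_two : mkA (X 2) = -mkA (X 0) - mkA (X 1) := by
  linear_combination mkA_sum_eq_zero

/-- The relation `x² + xy + y² = 0`, obtained by eliminating `w` from `x² + y² + w² = 0`;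
the factor `2` this produces is invertible. -/
lemma mkA_quadratic :
    mkA (X 0) ^ 2 + mkA (X 0) * mkA (X 1) + mkA (X 1) ^ 2 = 0 := by
  have h2 : (2 : ℚ) • (mkA (X 0) ^ 2 + mkA (X 0) * mkA (X 1) + mkA (X 1) ^ 2) = 0 := by
    have h := mkA_sum_sq_eq_zero
    rw [mkA_two] at h
    rw [two_smul]
    linear_combination h
  exact (smul_eq_zero.mp h2).resolve_left (by norm_num)

lemma vGen_sum_eq_zero : vGen 0 + vGen 1 + vGen 2 = 0 := by
  unfold vGen
  rw [← Submodule.Quotient.mk_add, ← Submodule.Quotient.mk_add, Submodule.Quotient.mk_eq_zero]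
  refine Submodule.subset_span ?_
  simp only [Set.mem_singleton_iff]
  funext i
  fin_cases i <;> simp

lemma eGen_two (m : ℕ) (j : Fin m) : eGen m j 2 = -eGen m j 0 - eGen m j 1 := by
  have h : vGen 2 = -vGen 0 - vGen 1 := by
    rw [← sub_eq_zero, ← vGen_sum_eq_zero]; abel
  unfold eGen
  rw [h, Pi.single_sub, Pi.single_neg, map_sub, map_neg]

lemma eGen_anticomm (m : ℕ) (j k : Fin m) (i l : Fin 3) :
    eGen m j i * eGen m k l = -(eGen m k l * eGen m j i) :=
  eq_neg_of_add_eq_zero_left (ExteriorAlgebra.ι_add_mul_swap _ _)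

lemma prodGen_singleton (i j : Fin 3) : prodGen 3 i {j} = eGen 3 j i := by
  simp [prodGen]

lemma prodGen_pair (i j k : Fin 3) (h : j < k) :
    prodGen 3 i {j, k} = eGen 3 j i * eGen 3 k i := by
  have hs : ({j, k} : Finset (Fin 3)).sort (· ≤ ·) = [j, k] := by
    rw [Finset.sort_insert _ (by simpa using h.le) (by simpa using h.ne), Finset.sort_singleton]
  simp [prodGen, hs]

lemma prodGen_triple (i : Fin 3) :
    prodGen 3 i {0, 1, 2} = eGen 3 0 i * eGen 3 1 i * eGen 3 2 i := by
  have hs : ({0, 1, 2} : Finset (Fin 3)).sort (· ≤ ·) = [0, 1, 2] := by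
    rw [Finset.sort_insert _ (by simp) (by simp), Finset.sort_insert _ (by simp) (by simp),
      Finset.sort_singleton]
  simp [prodGen, hs, mul_assoc]

/-- The identity over an arbitrary commutative `ℚ`-algebra `A` with `x + y + w = 0`,
`x² + xy + y² = 0` and an arbitrary `ℚ`-algebra `E` with anticommuting elements `g j i`
(copy `j` of the generator attached to variable `i`) satisfying `g j 0 + g j 1 + g j 2 = 0`. -/
lemma tensor_identity {A E : Type*} [CommRing A] [Algebra ℚ A] [Ring E] [Algebra ℚ E]
    (x y w : A) (g : Fin 3 → Fin 3 → E) (hw : w = -x - y) (q : x ^ 2 + x * y + y ^ 2 = 0)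
    (hg : ∀ j, g j 2 = -g j 0 - g j 1)
    (anti : ∀ j k i l, g j i * g k l = -(g k l * g j i))
    (Z : ℕ → (Fin 3 → E) → A ⊗[ℚ] E)
    (hZ : ∀ d f, Z d f = (x ^ d) ⊗ₜ[ℚ] f 0 + (y ^ d) ⊗ₜ[ℚ] f 1 + (w ^ d) ⊗ₜ[ℚ] f 2) :
    9 * Z 4 (fun i => g 0 i * g 1 i * g 2 i) =
      Z 3 (fun i => g 0 i * g 1 i) * Z 1 (g 2) - Z 3 (fun i => g 0 i * g 2 i) * Z 1 (g 1) +
        Z 3 (fun i => g 1 i * g 2 i) * Z 1 (g 0) + Z 2 (fun i => g 0 i * g 1 i) * Z 2 (g 2) -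
        Z 2 (fun i => g 0 i * g 2 i) * Z 2 (g 1) + Z 2 (fun i => g 1 i * g 2 i) * Z 2 (g 0) := by
  -- Signs of the permutations sorting `s₁s₃t₂` and `s₂s₃t₁` (indices start at `0` below).
  have mid : ∀ i l, g 0 i * g 2 i * g 1 l = -(g 0 i * g 1 l * g 2 i) := fun i l => by
    rw [mul_assoc, anti 2 1, mul_neg, mul_assoc]
  have last : ∀ i l, g 1 i * g 2 i * g 0 l = g 0 l * g 1 i * g 2 i := fun i l => by
    rw [mul_assoc, anti 2 0, mul_neg, ← mul_assoc, anti 1 0, neg_mul, neg_neg]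
  -- Every degree-four coefficient is a combination of `x⁴` and `x³y`.
  have y3 : y ^ 3 = x ^ 3 := by linear_combination (y - x) * q
  have w3 : w ^ 3 = x ^ 3 := by rw [hw]; linear_combination (-2 * x - y) * q
  have y4 : y ^ 4 = x ^ 3 * y := by linear_combination y * y3
  have w4 : w ^ 4 = -(x ^ 4) - x ^ 3 * y := by rw [pow_succ, w3, hw]; ring
  have xw : x ^ 3 * w = -(x ^ 4) - x ^ 3 * y := by rw [hw]; ring
  have xx2 : x ^ 2 * x ^ 2 = x ^ 4 := by ring
  have yy2 : y ^ 2 * y ^ 2 = x ^ 3 * y := by linear_combination y4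
  have ww2 : w ^ 2 * w ^ 2 = -(x ^ 4) - x ^ 3 * y := by linear_combination w4
  have xy2 : x ^ 2 * y ^ 2 = -(x ^ 4) - x ^ 3 * y := by linear_combination x ^ 2 * q
  have yx2 : y ^ 2 * x ^ 2 = -(x ^ 4) - x ^ 3 * y := by linear_combination x ^ 2 * q
  have w2 : w ^ 2 = x * y := by rw [hw]; linear_combination q
  have xw2 : x ^ 2 * w ^ 2 = x ^ 3 * y := by rw [w2]; ring
  have wx2 : w ^ 2 * x ^ 2 = x ^ 3 * y := by rw [w2]; ring
  have yw2 : y ^ 2 * w ^ 2 = x ^ 4 := by rw [w2]; linear_combination x * y3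
  have wy2 : w ^ 2 * y ^ 2 = x ^ 4 := by rw [w2]; linear_combination x * y3
  have xx : x ^ 3 * x = x ^ 4 := by ring
  have nine : (9 : A ⊗[ℚ] E) = 1 + 1 + 1 + 1 + 1 + 1 + 1 + 1 + 1 := by norm_num
  rw [nine]
  simp only [hZ, pow_one, mul_add, add_mul, one_mul, Algebra.TensorProduct.tmul_mul_tmul, mid,
    last, y3, w3]
  simp only [y4, w4, xx, xw, xx2, yy2, ww2, xy2, yx2, xw2, wx2, yw2, wy2]
  generalize x ^ 4 = u
  generalize x ^ 3 * y = v
  simp only [hg, mul_sub, sub_mul, mul_neg, neg_mul, TensorProduct.tmul_sub, TensorProduct.tmul_neg,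
    TensorProduct.sub_tmul, TensorProduct.neg_tmul]
  abel

/-- In `K(3)` (indices shifted: the paper's `{1,2,3}` is `{0,1,2}` here):
`9·z(5,{1,2,3}) = z(4,{1,2})·z(2,{3}) − z(4,{1,3})·z(2,{2}) + z(4,{2,3})·z(2,{1})
+ z(3,{1,2})·z(3,{3}) − z(3,{1,3})·z(3,{2}) + z(3,{2,3})·z(3,{1})`. -/
theorem nine_z5_identity :
    9 * zS 3 5 {0, 1, 2} =
      zS 3 4 {0, 1} * zS 3 2 {2} - zS 3 4 {0, 2} * zS 3 2 {1} + zS 3 4 {1, 2} * zS 3 2 {0} +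
        zS 3 3 {0, 1} * zS 3 3 {2} - zS 3 3 {0, 2} * zS 3 3 {1} + zS 3 3 {1, 2} * zS 3 3 {0} := by
  have h := tensor_identity (mkA (X 0)) (mkA (X 1)) (mkA (X 2)) (eGen 3) mkA_two mkA_quadratic
    (eGen_two 3) (eGen_anticomm 3) _ (fun _ _ => rfl)
  simpa only [zS, zz, prodGen_triple, prodGen_singleton, prodGen_pair _ 0 1 (by decide),
    prodGen_pair _ 0 2 (by decide), prodGen_pair _ 1 2 (by decide), map_pow] using h

end
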